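/- Normal solutions of the Lagrange multiplier system satisfy Lagrange's equations: Let (ρ,C) be local Lie algebroid data on ℝ^n with fiber ℝ^m satisfying the first structure equation, and let L : ℝ^n × ℝ^m → ℝ be C². Suppose x : [t₀,t₁] → ℝ^n, y : [t₀,t₁] → ℝ^m and p : [t₀,t₁] → ℝ^n are C¹ curves satisfying, for all t ∈ [t₀,t₁]: (i) Σ_i p_i(t) ρ^i_α(x(t)) = ∂L/∂y^α(x(t),y(t)) for all α; (ii) (x^i)'(t) = Σ_α ρ^i_α(x(t)) y^α(t) for all i; and (iii) (p_i)'(t) = ∂L/∂x^i(x(t),y(t)) − Σ_{j,α} p_j(t) ∂ρ^j_α/∂x^i(x(t)) y^α(t) for all i. Then (x,y) is a solution of Lagrange's equations: d/dt[∂L/∂y^α(x(t),y(t))] + Σ_{β,γ} C^γ_{αβ}(x(t)) y^β(t) ∂L/∂y^γ(x(t),y(t)) = Σ_i ρ^i_α(x(t)) ∂L/∂x^i(x(t),y(t)) for all α and all t ∈ [t₀,t₁]. -/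

import Mathlib

/-!
Along the flow of (ii) and (iii) the covector `ρ^* p = Σ_i p_i ρ^i_α(x)` satisfies Lagrange's
equations with `∂L/∂y` replaced by `ρ^* p`: differentiating it produces `Σ_i ρ^i_α ∂L/∂x^i` minus
the contraction of `p_j y^β` with `Σ_i (ρ^i_α ∂_i ρ^j_β − ρ^i_β ∂_i ρ^j_α)`, which the first
structure equation turns into `Σ_γ ρ^j_γ C^γ_{αβ}`. Relation (i) says that `ρ^* p = ∂L/∂y`.

Relation (i) holds only on `[t₀,t₁]`, whereas Lagrange's equations involve two-sided derivatives.
At the endpoints one therefore needs `∂L/∂y` to be differentiable along `(x, y)`, which is where the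
second derivatives of `L` enter, and the uniqueness of derivatives within `[t₀,t₁]`.
-/

open Set

/-- Partial derivative of a scalar function on `ℝ^n` in the `j`-th coordinate direction. -/
noncomputable def pderiv' {n : ℕ} (f : (Fin n → ℝ) → ℝ) (x : Fin n → ℝ) (j : Fin n) : ℝ :=
  deriv (fun s => f (Function.update x j s)) (x j)

/-- Local Lie algebroid data on `ℝ^n` with fiber `ℝ^m`: smooth anchor coefficients
`ρ^i_α` and smooth structure functions `C^α_{βγ}`, antisymmetric in the lower indices. -/
structure LocalAlgebroidData (n m : ℕ) where
  ρ : (Fin n → ℝ) → Fin n → Fin m → ℝ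
  C : (Fin n → ℝ) → Fin m → Fin m → Fin m → ℝ
  smooth_ρ : ContDiff ℝ (⊤ : ℕ∞) ρ
  smooth_C : ContDiff ℝ (⊤ : ℕ∞) C
  antisymm : ∀ x α β γ, C x α β γ = - C x α γ β

/-- Partial derivative `∂L/∂x^i` of a Lagrangian `L : ℝ^n × ℝ^m → ℝ`. -/
noncomputable def pLx {n m : ℕ} (L : (Fin n → ℝ) × (Fin m → ℝ) → ℝ)
    (x : Fin n → ℝ) (y : Fin m → ℝ) (i : Fin n) : ℝ :=
  pderiv' (fun z => L (z, y)) x i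

/-- Partial derivative `∂L/∂y^α` of a Lagrangian `L : ℝ^n × ℝ^m → ℝ`. -/
noncomputable def pLy {n m : ℕ} (L : (Fin n → ℝ) × (Fin m → ℝ) → ℝ)
    (x : Fin n → ℝ) (y : Fin m → ℝ) (α : Fin m) : ℝ :=
  pderiv' (fun w => L (x, w)) y α

/-- The Euler–Lagrange expression
`EL_α(t) = d/dt[∂L/∂y^α] + Σ_{β,γ} C^γ_{αβ} y^β ∂L/∂y^γ − Σ_i ρ^i_α ∂L/∂x^i`
of a curve `(x,y)`. -/
noncomputable def ELexpr {n m : ℕ} (A : LocalAlgebroidData n m)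
    (L : (Fin n → ℝ) × (Fin m → ℝ) → ℝ)
    (x : ℝ → Fin n → ℝ) (y : ℝ → Fin m → ℝ) (α : Fin m) (t : ℝ) : ℝ :=
  deriv (fun s => pLy L (x s) (y s) α) t
    + ∑ β, ∑ γ, A.C (x t) γ α β * y t β * pLy L (x t) (y t) γ
    - ∑ i, A.ρ (x t) i α * pLx L (x t) (y t) i

/-- The curve `(x,y)` is admissible on `[t₀,t₁]`: `(x^i)' = Σ_α ρ^i_α(x) y^α`. -/
def IsAdmissible {n m : ℕ} (A : LocalAlgebroidData n m) (t₀ t₁ : ℝ)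
    (x : ℝ → Fin n → ℝ) (y : ℝ → Fin m → ℝ) : Prop :=
  ∀ t ∈ Icc t₀ t₁, ∀ i, deriv (fun s => x s i) t = ∑ α, A.ρ (x t) i α * y t α

/-- `(x,y)` is a solution of Lagrange's equations for `L` on `[t₀,t₁]`. -/
def IsLagrangeSolution {n m : ℕ} (A : LocalAlgebroidData n m)
    (L : (Fin n → ℝ) × (Fin m → ℝ) → ℝ) (t₀ t₁ : ℝ)
    (x : ℝ → Fin n → ℝ) (y : ℝ → Fin m → ℝ) : Prop :=
  ∀ α, ∀ t ∈ Icc t₀ t₁,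
    deriv (fun s => pLy L (x s) (y s) α) t
        + ∑ β, ∑ γ, A.C (x t) γ α β * y t β * pLy L (x t) (y t) γ
      = ∑ i, A.ρ (x t) i α * pLx L (x t) (y t) i

/-- A local morphism of local Lie algebroid data: a pair of smooth maps `(φ, Φ)`
satisfying the admissibility and morphism conditions. -/
structure LocalMorphism {n m n' m' : ℕ}
    (A : LocalAlgebroidData n m) (A' : LocalAlgebroidData n' m') where
  φ : (Fin n → ℝ) → Fin n' → ℝ
  Φ : (Fin n → ℝ) → Fin m' → Fin m → ℝ
  smooth_φ : ContDiff ℝ (⊤ : ℕ∞) φ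
  smooth_Φ : ContDiff ℝ (⊤ : ℕ∞) Φ
  adm : ∀ x (k : Fin n') (α : Fin m),
    ∑ i, pderiv' (fun z => φ z k) x i * A.ρ x i α
      = ∑ β, A'.ρ (φ x) k β * Φ x β α
  morph : ∀ x (α : Fin m') (μ ν : Fin m),
    (∑ i, (A.ρ x i ν * pderiv' (fun z => Φ z α μ) x i
            - A.ρ x i μ * pderiv' (fun z => Φ z α ν) x i))
      + (∑ β, Φ x α β * A.C x β μ ν)
      - (∑ β, ∑ γ, A'.C (φ x) α β γ * Φ x β μ * Φ x γ ν) = 0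

/-- The first structure equation of local Lie algebroid data. -/
def FirstStructureEq {n m : ℕ} (A : LocalAlgebroidData n m) : Prop :=
  ∀ (x : Fin n → ℝ) (i : Fin n) (α β : Fin m),
    ∑ j, (A.ρ x j α * pderiv' (fun z => A.ρ z i β) x j
           - A.ρ x j β * pderiv' (fun z => A.ρ z i α) x j)
      = ∑ γ, A.ρ x i γ * A.C x γ α β

section PartialDerivatives

variable {n m : ℕ}

theorem pderiv'_eq_of_hasFDerivAt {f : (Fin n → ℝ) → ℝ} {f' : (Fin n → ℝ) →L[ℝ] ℝ}
    {x : Fin n → ℝ} (hf : HasFDerivAt f f' x) (j : Fin n) :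
    pderiv' f x j = f' (Pi.single j 1) := by
  rw [← Function.update_eq_self j x] at hf
  exact (hf.comp_hasDerivAt (x j) (hasDerivAt_update x j (x j))).deriv

theorem fderiv_apply_eq_sum_pderiv' {f : (Fin n → ℝ) → ℝ} {x : Fin n → ℝ}
    (hf : DifferentiableAt ℝ f x) (v : Fin n → ℝ) :
    fderiv ℝ f x v = ∑ j, pderiv' f x j * v j := by
  have expansion := congrArg (fderiv ℝ f x) (pi_eq_sum_univ' v)
  simpa [pderiv'_eq_of_hasFDerivAt hf.hasFDerivAt, mul_comm, Pi.single_apply] using expansion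

theorem hasDerivWithinAt_comp_sum_pderiv' {f : (Fin n → ℝ) → ℝ} {x : ℝ → Fin n → ℝ}
    {x' : Fin n → ℝ} {s : Set ℝ} {t : ℝ} (hf : DifferentiableAt ℝ f (x t))
    (hx : HasDerivWithinAt x x' s t) :
    HasDerivWithinAt (fun τ => f (x τ)) (∑ j, pderiv' f (x t) j * x' j) s t := by
  rw [← fderiv_apply_eq_sum_pderiv' hf]
  exact hf.hasFDerivAt.comp_hasDerivWithinAt t hx

theorem pLy_eq_fderiv {L : (Fin n → ℝ) × (Fin m → ℝ) → ℝ} {x : Fin n → ℝ} {y : Fin m → ℝ}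
    (hL : DifferentiableAt ℝ L (x, y)) (α : Fin m) :
    pLy L x y α = fderiv ℝ L (x, y) (0, Pi.single α 1) :=
  pderiv'_eq_of_hasFDerivAt (hL.hasFDerivAt.comp y (hasFDerivAt_prodMk_right x y)) α

theorem differentiableAt_pLy_comp {L : (Fin n → ℝ) × (Fin m → ℝ) → ℝ}
    (hL : Differentiable ℝ L) {x : ℝ → Fin n → ℝ} {y : ℝ → Fin m → ℝ} {t : ℝ}
    (hL' : DifferentiableAt ℝ (fderiv ℝ L) (x t, y t))
    (hx : DifferentiableAt ℝ x t) (hy : DifferentiableAt ℝ y t) (α : Fin m) :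
    DifferentiableAt ℝ (fun τ => pLy L (x τ) (y τ) α) t := by
  simp only [pLy_eq_fderiv (hL _)]
  have hderiv : DifferentiableAt ℝ (fun τ => fderiv ℝ L (x τ, y τ)) t :=
    DifferentiableAt.comp t hL' (hx.prodMk hy)
  exact hderiv.clm_apply (differentiableAt_const _)

end PartialDerivatives

namespace LocalAlgebroidData

variable {n m : ℕ} (A : LocalAlgebroidData n m)

theorem differentiable_ρ_apply (i : Fin n) (α : Fin m) :
    Differentiable ℝ fun z => A.ρ z i α :=
  have hρ : Differentiable ℝ A.ρ := A.smooth_ρ.differentiable (by simp)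
  differentiable_pi.1 (differentiable_pi.1 hρ i) α

/-- The transpose `ρ^* : T^*M → E^*` of the anchor, `(ρ^* p)_α = Σ_i p_i ρ^i_α(x)`. The multiplier
relation says that the fibre derivative of the Lagrangian is `ρ^* p`. -/
def anchorDual (x p : Fin n → ℝ) (α : Fin m) : ℝ :=
  ∑ i, p i * A.ρ x i α

variable {A}

theorem sum_C_mul_anchorDual_eq_sum_bracket (hA : FirstStructureEq A) (x p : Fin n → ℝ)
    (y : Fin m → ℝ) (α : Fin m) :
    ∑ β, ∑ γ, A.C x γ α β * y β * A.anchorDual x p γ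
      = ∑ i, ∑ β, p i * y β * ∑ j, (A.ρ x j α * pderiv' (fun z => A.ρ z i β) x j
          - A.ρ x j β * pderiv' (fun z => A.ρ z i α) x j) := by
  simp only [hA x, anchorDual, Finset.mul_sum]
  rw [Finset.sum_comm (s := (Finset.univ : Finset (Fin n)))]
  refine Finset.sum_congr rfl fun β _ => ?_
  rw [Finset.sum_comm]
  exact Finset.sum_congr rfl fun i _ => Finset.sum_congr rfl fun γ _ => by ring

theorem sum_C_mul_anchorDual_eq_sub (hA : FirstStructureEq A) (x p : Fin n → ℝ)
    (y : Fin m → ℝ) (α : Fin m) :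
    ∑ β, ∑ γ, A.C x γ α β * y β * A.anchorDual x p γ
      = ∑ i, (∑ j, ∑ β, p j * pderiv' (fun z => A.ρ z j β) x i * y β) * A.ρ x i α
        - ∑ i, p i * ∑ j, pderiv' (fun z => A.ρ z i α) x j * ∑ β, A.ρ x j β * y β := by
  have along_anchor :
      ∑ i, (∑ j, ∑ β, p j * pderiv' (fun z => A.ρ z j β) x i * y β) * A.ρ x i α
        = ∑ j, ∑ β, ∑ i, p j * y β * (A.ρ x i α * pderiv' (fun z => A.ρ z j β) x i) := by
    simp only [Finset.sum_mul]
    rw [Finset.sum_comm]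
    refine Finset.sum_congr rfl fun j _ => ?_
    rw [Finset.sum_comm]
    exact Finset.sum_congr rfl fun β _ => Finset.sum_congr rfl fun i _ => by ring
  have along_velocity :
      ∑ i, p i * ∑ j, pderiv' (fun z => A.ρ z i α) x j * ∑ β, A.ρ x j β * y β
        = ∑ i, ∑ β, ∑ j, p i * y β * (A.ρ x j β * pderiv' (fun z => A.ρ z i α) x j) := by
    simp only [Finset.mul_sum]
    refine Finset.sum_congr rfl fun i _ => ?_
    rw [Finset.sum_comm]
    exact Finset.sum_congr rfl fun β _ => Finset.sum_congr rfl fun j _ => by ring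
  rw [along_anchor, along_velocity, sum_C_mul_anchorDual_eq_sum_bracket hA]
  simp only [Finset.mul_sum, mul_sub, Finset.sum_sub_distrib]

/-- Here `y` and `l` stand for the values at time `t` of the velocity and of `∂L/∂x`. -/
theorem hasDerivWithinAt_anchorDual (hA : FirstStructureEq A) {x p : ℝ → Fin n → ℝ}
    {y : Fin m → ℝ} {l : Fin n → ℝ} {s : Set ℝ} {t : ℝ}
    (hx : HasDerivWithinAt x (fun i => ∑ β, A.ρ (x t) i β * y β) s t)
    (hp : HasDerivWithinAt p
      (fun i => l i - ∑ j, ∑ β, p t j * pderiv' (fun z => A.ρ z j β) (x t) i * y β) s t)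
    (α : Fin m) :
    HasDerivWithinAt (fun τ => A.anchorDual (x τ) (p τ) α)
      (∑ i, A.ρ (x t) i α * l i
        - ∑ β, ∑ γ, A.C (x t) γ α β * y β * A.anchorDual (x t) (p t) γ) s t := by
  have product_rule := HasDerivWithinAt.fun_sum (u := Finset.univ) fun i _ =>
    (hasDerivWithinAt_pi.1 hp i).fun_mul
      (hasDerivWithinAt_comp_sum_pderiv' (A.differentiable_ρ_apply i α (x t)) hx)
  refine product_rule.congr_deriv ?_
  rw [sum_C_mul_anchorDual_eq_sub hA]
  simp only [sub_mul, Finset.sum_add_distrib, Finset.sum_sub_distrib, mul_comm (l _)]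
  ring

end LocalAlgebroidData

theorem normal_multiplier_solutions_satisfy_lagrange_general
    {n m : ℕ} {A : LocalAlgebroidData n m} (hA : FirstStructureEq A)
    {L : (Fin n → ℝ) × (Fin m → ℝ) → ℝ} (hL : Differentiable ℝ L)
    (hL' : Differentiable ℝ (fderiv ℝ L)) {s : Set ℝ} (hs : UniqueDiffOn ℝ s)
    {x : ℝ → Fin n → ℝ} {y : ℝ → Fin m → ℝ} {p : ℝ → Fin n → ℝ}
    (hx : ∀ t ∈ s, DifferentiableAt ℝ x t) (hy : ∀ t ∈ s, DifferentiableAt ℝ y t)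
    (hp : ∀ t ∈ s, DifferentiableAt ℝ p t)
    (h1 : ∀ t ∈ s, ∀ α, ∑ i, p t i * A.ρ (x t) i α = pLy L (x t) (y t) α)
    (h2 : ∀ t ∈ s, ∀ i, deriv (fun τ => x τ i) t = ∑ α, A.ρ (x t) i α * y t α)
    (h3 : ∀ t ∈ s, ∀ i, deriv (fun τ => p τ i) t
      = pLx L (x t) (y t) i
        - ∑ j, ∑ α, p t j * pderiv' (fun z => A.ρ z j α) (x t) i * y t α)
    (α : Fin m) {t : ℝ} (ht : t ∈ s) :
    deriv (fun τ => pLy L (x τ) (y τ) α) t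
        + ∑ β, ∑ γ, A.C (x t) γ α β * y t β * pLy L (x t) (y t) γ
      = ∑ i, A.ρ (x t) i α * pLx L (x t) (y t) i := by
  have hx' : HasDerivAt x (fun i => ∑ β, A.ρ (x t) i β * y t β) t :=
    hasDerivAt_pi.2 fun i => h2 t ht i ▸ (differentiableAt_pi.1 (hx t ht) i).hasDerivAt
  have hp' : HasDerivAt p (fun i => pLx L (x t) (y t) i
      - ∑ j, ∑ β, p t j * pderiv' (fun z => A.ρ z j β) (x t) i * y t β) t :=
    hasDerivAt_pi.2 fun i => h3 t ht i ▸ (differentiableAt_pi.1 (hp t ht) i).hasDerivAt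
  have multiplier : ∀ τ ∈ s, ∀ γ, pLy L (x τ) (y τ) γ = A.anchorDual (x τ) (p τ) γ :=
    fun τ hτ γ => (h1 τ hτ γ).symm
  have within_s : HasDerivWithinAt (fun τ => pLy L (x τ) (y τ) α)
      (∑ i, A.ρ (x t) i α * pLx L (x t) (y t) i
        - ∑ β, ∑ γ, A.C (x t) γ α β * y t β * A.anchorDual (x t) (p t) γ) s t :=
    (LocalAlgebroidData.hasDerivWithinAt_anchorDual hA hx'.hasDerivWithinAt
      hp'.hasDerivWithinAt α).congr (fun τ hτ => multiplier τ hτ α) (multiplier t ht α)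
  have two_sided := (differentiableAt_pLy_comp hL (hL' _) (hx t ht) (hy t ht) α).hasDerivAt
  simp only [(hs t ht).eq_deriv s two_sided.hasDerivWithinAt within_s, multiplier t ht,
    sub_add_cancel]

/-- **Normal solutions of the Lagrange multiplier system satisfy Lagrange's equations.**
If C¹ curves `x`, `y`, `p` satisfy (i) `Σ_i p_i ρ^i_α(x) = ∂L/∂y^α(x,y)`, (ii) the
admissibility equation `(x^i)' = Σ_α ρ^i_α(x) y^α`, and (iii) the costate equation
`(p_i)' = ∂L/∂x^i(x,y) − Σ_{j,α} p_j ∂ρ^j_α/∂x^i(x) y^α`, then `(x,y)` solves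
Lagrange's equations for `L`. -/
theorem normal_multiplier_solutions_satisfy_lagrange
    {n m : ℕ} (A : LocalAlgebroidData n m) (hA : FirstStructureEq A)
    (L : (Fin n → ℝ) × (Fin m → ℝ) → ℝ) (hL : ContDiff ℝ 2 L)
    (t₀ t₁ : ℝ) (ht : t₀ < t₁)
    (x : ℝ → Fin n → ℝ) (y : ℝ → Fin m → ℝ) (p : ℝ → Fin n → ℝ)
    (hx : ContDiff ℝ 1 x) (hy : ContDiff ℝ 1 y) (hp : ContDiff ℝ 1 p)
    (h1 : ∀ t ∈ Icc t₀ t₁, ∀ α,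
      ∑ i, p t i * A.ρ (x t) i α = pLy L (x t) (y t) α)
    (h2 : ∀ t ∈ Icc t₀ t₁, ∀ i,
      deriv (fun s => x s i) t = ∑ α, A.ρ (x t) i α * y t α)
    (h3 : ∀ t ∈ Icc t₀ t₁, ∀ i,
      deriv (fun s => p s i) t
        = pLx L (x t) (y t) i
          - ∑ j, ∑ α, p t j * pderiv' (fun z => A.ρ z j α) (x t) i * y t α) :
    IsLagrangeSolution A L t₀ t₁ x y :=
  fun α _ htI => normal_multiplier_solutions_satisfy_lagrange_general hA
    (hL.differentiable two_ne_zero)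
    ((hL.fderiv_right (m := 1) one_add_one_eq_two.le).differentiable one_ne_zero)
    (uniqueDiffOn_Icc ht) (fun t _ => hx.differentiable one_ne_zero t)
    (fun t _ => hy.differentiable one_ne_zero t) (fun t _ => hp.differentiable one_ne_zero t)
    h1 h2 h3 α htI
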